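/- If F is continuous in a neighborhood of μ_τ(F) for a given τ ∈ (0,1), then τ ↦ μ_τ(F) is differentiable at τ with derivative ∂_τ μ_τ(F) = (∫_{μ_τ}^∞ (1−F(y)) dy + ∫_{−∞}^{μ_τ} F(y) dy) / (τ(1−F(μ_τ)) + (1−τ)F(μ_τ)). -/

import Mathlib

open MeasureTheory Filter Set Asymptotics

noncomputable def ident (τ x y : ℝ) : ℝ :=
  if x ≤ y then τ * (y - x) else -((1 - τ) * (x - y))

noncomputable def score (τ x y : ℝ) : ℝ :=
  τ / 2 * ((max (y - x) 0) ^ 2 - (max y 0) ^ 2) +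
    (1 - τ) / 2 * ((max (x - y) 0) ^ 2 - (max (-y) 0) ^ 2)


theorem aux_intB {Ω : Type*} [MeasurableSpace Ω] (P : Measure Ω) [IsProbabilityMeasure P]
    (Y : Ω → ℝ) (hY : Integrable Y P) (x : ℝ) : Integrable (fun ω => max (x - Y ω) 0) P :=
  ((integrable_const x).sub hY).pos_part

theorem aux_intA {Ω : Type*} [MeasurableSpace Ω] (P : Measure Ω) [IsProbabilityMeasure P]
    (Y : Ω → ℝ) (hY : Integrable Y P) (x : ℝ) : Integrable (fun ω => max (Y ω - x) 0) P :=
  (hY.sub (integrable_const x)).pos_part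

theorem aux_AB {Ω : Type*} [MeasurableSpace Ω] (P : Measure Ω) [IsProbabilityMeasure P]
    (Y : Ω → ℝ) (hY : Integrable Y P) (x : ℝ) :
    ∫ ω, max (Y ω - x) 0 ∂P = ∫ ω, Y ω ∂P - x + ∫ ω, max (x - Y ω) 0 ∂P := by
  have h : ∫ ω, (Y ω - x + max (x - Y ω) 0) ∂P = ∫ ω, (Y ω - x) ∂P + ∫ ω, max (x - Y ω) 0 ∂P :=
    integral_add (hY.sub (integrable_const x)) (aux_intB P Y hY x)
  rw [integral_sub hY (integrable_const x)] at h
  simp only [integral_const, probReal_univ, one_smul] at h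
  rw [← h]
  congr 1
  ext ω
  rcases le_total (Y ω) x with h | h
  · rw [max_eq_right (by linarith), max_eq_left (by linarith)]; ring
  · rw [max_eq_left (by linarith), max_eq_right (by linarith)]; ring

theorem aux_ident {Ω : Type*} [MeasurableSpace Ω] (P : Measure Ω) [IsProbabilityMeasure P]
    (Y : Ω → ℝ) (hY : Integrable Y P) (t x : ℝ) :
    ∫ ω, ident t x (Y ω) ∂P =
      t * ∫ ω, max (Y ω - x) 0 ∂P - (1 - t) * ∫ ω, max (x - Y ω) 0 ∂P := by
  rw [← integral_const_mul, ← integral_const_mul,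
    ← integral_sub ((aux_intA P Y hY x).const_mul _) ((aux_intB P Y hY x).const_mul _)]
  congr 1
  ext ω
  unfold ident
  split_ifs with h
  · rw [max_eq_left (by linarith), max_eq_right (by linarith)]; ring
  · rw [max_eq_right (by linarith), max_eq_left (by linarith)]; ring

theorem aux_mono {Ω : Type*} [MeasurableSpace Ω] (P : Measure Ω) [IsProbabilityMeasure P]
    (Y : Ω → ℝ) (hY : Integrable Y P) (x y : ℝ) (hxy : x ≤ y) :
    0 ≤ ∫ ω, max (y - Y ω) 0 ∂P - ∫ ω, max (x - Y ω) 0 ∂P ∧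
    ∫ ω, max (y - Y ω) 0 ∂P - ∫ ω, max (x - Y ω) 0 ∂P ≤ y - x := by
  constructor
  · rw [sub_nonneg]
    refine integral_mono (aux_intB P Y hY x) (aux_intB P Y hY y) fun ω => ?_
    exact max_le_max (by linarith) le_rfl
  · rw [← integral_sub (aux_intB P Y hY y) (aux_intB P Y hY x)]
    have : y - x = ∫ ω, (y - x) ∂P := by simp
    rw [this]
    refine integral_mono ((aux_intB P Y hY y).sub (aux_intB P Y hY x)) (integrable_const _)
      fun ω => ?_
    dsimp only
    rw [sub_le_iff_le_add]
    refine max_le ?_ ?_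
    · have := le_max_left (x - Y ω) 0; linarith
    · have := le_max_right (x - Y ω) 0; linarith

theorem aux_atom {Ω : Type*} [MeasurableSpace Ω] (P : Measure Ω) [IsProbabilityMeasure P]
    (Y : Ω → ℝ) (hY : Integrable Y P)
    (F : ℝ → ℝ) (hF : ∀ y, F y = (P {ω | Y ω ≤ y}).toReal) (c : ℝ) (hc : ContinuousAt F c) :
    P {ω | Y ω = c} = 0 := by
  have hle : ∀ y < c, P.real {ω | Y ω = c} ≤ F c - F y := by
    intro y hy
    have hm : NullMeasurableSet {ω | Y ω = c} P :=
      nullMeasurableSet_eq_fun hY.aemeasurable aemeasurable_const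
    have hd : Disjoint {ω | Y ω ≤ y} {ω | Y ω = c} := by
      rw [Set.disjoint_left]
      intro ω h1 h2
      simp only [mem_ofPred_eq] at h1 h2
      linarith
    have h1 := measureReal_union₀ (μ := P) hm hd.aedisjoint
    have h2 : P.real ({ω | Y ω ≤ y} ∪ {ω | Y ω = c}) ≤ P.real {ω | Y ω ≤ c} := by
      refine measureReal_mono ?_ (measure_ne_top _ _)
      rintro ω (h | h)
      · exact le_trans h hy.le
      · exact le_of_eq h
    rw [hF, hF]
    change _ ≤ P.real _ - P.real _
    linarith
  have ht : Tendsto (fun y => F c - F y) (nhdsWithin c (Iio c)) (nhds (F c - F c)) :=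
    (tendsto_const_nhds.sub hc.tendsto).mono_left nhdsWithin_le_nhds
  have h0 : P.real {ω | Y ω = c} ≤ F c - F c := by
    refine ge_of_tendsto ht ?_
    filter_upwards [self_mem_nhdsWithin] with y hy using hle y hy
  rw [sub_self] at h0
  exact (measureReal_eq_zero_iff).1 (le_antisymm h0 measureReal_nonneg)

theorem aux_deriv {Ω : Type*} [MeasurableSpace Ω] (P : Measure Ω) [IsProbabilityMeasure P]
    (Y : Ω → ℝ) (hY : Integrable Y P)
    (F : ℝ → ℝ) (hF : ∀ y, F y = (P {ω | Y ω ≤ y}).toReal) (c : ℝ) (hc : ContinuousAt F c) :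
    HasDerivAt (fun x => ∫ ω, max (x - Y ω) 0 ∂P) (F c) c := by
  have hat := aux_atom P Y hY F hF c hc
  have hm : NullMeasurableSet {ω | Y ω ≤ c} P :=
    nullMeasurableSet_le hY.aemeasurable aemeasurable_const
  have hFi : F c = ∫ ω, ({ω | Y ω ≤ c}.indicator (fun _ => (1:ℝ))) ω ∂P := by
    rw [integral_indicator₀ hm, hF]
    simp [Measure.real]
  rw [hFi]
  refine (hasDerivAt_integral_of_dominated_loc_of_lip (s := univ) (bound := fun _ => 1)
    Filter.univ_mem ?_ (aux_intB P Y hY c) ?_ ?_ (integrable_const _) ?_).2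
  · exact Eventually.of_forall fun x => (aux_intB P Y hY x).aestronglyMeasurable
  · exact (aestronglyMeasurable_const (b := (1:ℝ))).indicator₀ hm
  · refine Eventually.of_forall fun ω => ?_
    refine LipschitzOnWith.of_dist_le_mul ?_
    intro x _ y _
    simp only [Real.dist_eq]
    have := abs_max_sub_max_le_abs (x - Y ω) (y - Y ω) 0
    simp only [sub_sub_sub_cancel_right] at this
    simpa using this
  · have : ∀ᵐ ω ∂P, Y ω ≠ c := by
      rw [ae_iff]; simpa using hat
    filter_upwards [this] with ω hω
    rcases lt_or_gt_of_ne hω with h | h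
    · rw [indicator_of_mem (by exact h.le)]
      refine ((hasDerivAt_id c).sub_const (Y ω)).congr_of_eventuallyEq ?_
      filter_upwards [lt_mem_nhds h] with x hx
      exact max_eq_left (by linarith)
    · rw [indicator_of_notMem (by simpa using h)]
      refine (hasDerivAt_const c (0:ℝ)).congr_of_eventuallyEq ?_
      filter_upwards [gt_mem_nhds h] with x hx
      exact max_eq_right (by linarith)

theorem aux_pos {Ω : Type*} [MeasurableSpace Ω] (P : Measure Ω) [IsProbabilityMeasure P]
    (Y : Ω → ℝ) (hY : Integrable Y P) (c : ℝ) (hat : P {ω | Y ω = c} = 0) :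
    0 < ∫ ω, max (Y ω - c) 0 ∂P + ∫ ω, max (c - Y ω) 0 ∂P := by
  rw [← integral_add (aux_intA P Y hY c) (aux_intB P Y hY c)]
  have hnn : 0 ≤ fun ω => max (Y ω - c) 0 + max (c - Y ω) 0 := fun ω => by
    change 0 ≤ max (Y ω - c) 0 + max (c - Y ω) 0
    positivity
  rcases (integral_nonneg (μ := P) hnn).lt_or_eq with h | h
  · exact h
  exfalso
  have h2 := (integral_eq_zero_iff_of_nonneg hnn
    ((aux_intA P Y hY c).add (aux_intB P Y hY c))).1 h.symm
  have h3 : ∀ᵐ ω ∂P, Y ω ≠ c := by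
    rw [ae_iff]; simpa using hat
  have : ∀ᵐ ω ∂P, False := by
    filter_upwards [h2, h3] with ω h4 h5
    simp only [Pi.zero_apply] at h4
    have a1 := le_max_left (Y ω - c) 0
    have a2 := le_max_right (Y ω - c) 0
    have a3 := le_max_left (c - Y ω) 0
    have a4 := le_max_right (c - Y ω) 0
    exact h5 (by linarith)
  have h7 : P = 0 := by simpa using this
  exact IsProbabilityMeasure.ne_zero P h7

theorem aux_layerB {Ω : Type*} [MeasurableSpace Ω] (P : Measure Ω) [IsProbabilityMeasure P]
    (Y : Ω → ℝ) (hY : Integrable Y P)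
    (F : ℝ → ℝ) (hF : ∀ y, F y = (P {ω | Y ω ≤ y}).toReal) (c : ℝ) :
    ∫ y in Set.Iic c, F y = ∫ ω, max (c - Y ω) 0 ∂P := by
  rw [(aux_intB P Y hY c).integral_eq_integral_meas_le
    (Eventually.of_forall fun ω => le_max_right _ _)]
  have h1 : ∫ t in Ioi (0:ℝ), P.real {a | t ≤ max (c - Y a) 0} = ∫ t in Ioi (0:ℝ), F (c - t) := by
    refine setIntegral_congr_fun measurableSet_Ioi fun t ht => ?_
    rw [hF]
    change P.real _ = P.real _
    congr 1
    ext ω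
    simp only [mem_Ioi] at ht
    simp only [mem_ofPred_eq, le_max_iff]
    constructor
    · rintro (h | h) <;> linarith
    · intro h; left; linarith
  rw [h1, integral_Iic_eq_integral_Iio, ← integral_indicator measurableSet_Iio,
    ← integral_indicator measurableSet_Ioi, ← integral_sub_left_eq_self _ volume c]
  congr 1
  ext t
  simp only [indicator, mem_Iio, mem_Ioi, sub_lt_self_iff]

theorem aux_layerA {Ω : Type*} [MeasurableSpace Ω] (P : Measure Ω) [IsProbabilityMeasure P]
    (Y : Ω → ℝ) (hY : Integrable Y P)
    (F : ℝ → ℝ) (hF : ∀ y, F y = (P {ω | Y ω ≤ y}).toReal) (c : ℝ) :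
    ∫ y in Set.Ioi c, (1 - F y) = ∫ ω, max (Y ω - c) 0 ∂P := by
  rw [(aux_intA P Y hY c).integral_eq_integral_meas_lt
    (Eventually.of_forall fun ω => le_max_right _ _)]
  have h1 : ∫ t in Ioi (0:ℝ), P.real {a | t < max (Y a - c) 0} =
      ∫ t in Ioi (0:ℝ), (1 - F (t + c)) := by
    refine setIntegral_congr_fun measurableSet_Ioi fun t ht => ?_
    rw [hF]
    change P.real _ = 1 - P.real _
    have hm : NullMeasurableSet {ω | Y ω ≤ t + c} P :=
      nullMeasurableSet_le hY.aemeasurable aemeasurable_const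
    rw [← probReal_compl_eq_one_sub₀ hm]
    congr 1
    ext ω
    simp only [mem_Ioi] at ht
    simp only [mem_ofPred_eq, lt_max_iff, mem_compl_iff, not_le]
    constructor
    · rintro (h | h) <;> linarith
    · intro h; left; linarith
  rw [h1, ← integral_indicator measurableSet_Ioi,
    ← integral_indicator measurableSet_Ioi, ← integral_add_right_eq_self _ c]
  congr 1
  ext t
  simp only [indicator, mem_Ioi, lt_add_iff_pos_left]

theorem expectile_hasDerivAt
    {Ω : Type*} [MeasurableSpace Ω] (P : Measure Ω) [IsProbabilityMeasure P]
    (Y : Ω → ℝ) (hY : Integrable Y P)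
    (F : ℝ → ℝ) (hF : ∀ y, F y = (P {ω | Y ω ≤ y}).toReal)
    (μ : ℝ → ℝ) (hμ : ∀ τ ∈ Set.Ioo (0:ℝ) 1, ∫ ω, ident τ (μ τ) (Y ω) ∂P = 0)
    (τ : ℝ) (hτ : τ ∈ Set.Ioo (0:ℝ) 1)
    (hcont : ∃ ε > 0, ContinuousOn F (Set.Ioo (μ τ - ε) (μ τ + ε))) :
    HasDerivAt μ
      (((∫ y in Set.Ioi (μ τ), (1 - F y)) + ∫ y in Set.Iic (μ τ), F y) /
        (τ * (1 - F (μ τ)) + (1 - τ) * F (μ τ))) τ := by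
  obtain ⟨ε, hε, hco⟩ := hcont
  have hc : ContinuousAt F (μ τ) :=
    hco.continuousAt (Ioo_mem_nhds (by linarith) (by linarith))
  rw [aux_layerA P Y hY F hF, aux_layerB P Y hY F hF]
  have hS := aux_pos P Y hY (μ τ) (aux_atom P Y hY F hF _ hc)
  have hd := aux_deriv P Y hY F hF _ hc
  have hmono := aux_mono P Y hY
  have hF0 : 0 ≤ F (μ τ) := by rw [hF]; exact ENNReal.toReal_nonneg
  have hF1 : F (μ τ) ≤ 1 := by rw [hF]; exact measureReal_le_one
  simp only [aux_ident P Y hY] at hμ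
  simp only [aux_AB P Y hY] at hμ hS ⊢
  generalize (∫ ω, Y ω ∂P) = m at *
  generalize hB : (fun x => ∫ ω, max (x - Y ω) 0 ∂P) = B at *
  have hB' : ∀ x, ∫ ω, max (x - Y ω) 0 ∂P = B x := fun x => by rw [← hB]
  simp only [hB'] at *
  clear hB hB' hF
  obtain ⟨h0, h1⟩ := hτ
  have hτ0 := hμ τ ⟨h0, h1⟩
  set c := μ τ with hcdef
  have hD : 0 < τ * (1 - F c) + (1 - τ) * F c := by
    rcases hF0.lt_or_eq with h | h
    · have := mul_pos (sub_pos.2 h1) h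
      have := mul_nonneg h0.le (sub_nonneg.2 hF1)
      linarith
    · rw [← h]; linarith
  have hev : ∀ᶠ s in nhds τ, s ∈ Ioo (0:ℝ) 1 := Ioo_mem_nhds h0 h1
  -- continuity of the expectile at `τ`
  have hμc : ContinuousAt μ τ := by
    have hbd : ∀ᶠ s in nhds τ, |μ s - c| ≤ |s - τ| * (m - c + B c + B c) / min s (1 - s) := by
      filter_upwards [hev] with s hs
      have hm : 0 < min s (1 - s) := lt_min hs.1 (by linarith [hs.2])
      have e := hμ s hs
      have k1 := min_le_left s (1 - s)
      have k2 := min_le_right s (1 - s)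
      rw [le_div_iff₀ hm]
      generalize min s (1 - s) = q at *
      have hss : |s - τ| * (m - c + B c + B c) = |(s - τ) * (m - c + B c + B c)| := by
        rw [abs_mul, abs_of_pos hS]
      rw [hss]
      rcases le_total c (μ s) with h | h
      · obtain ⟨b1, b2⟩ := hmono _ _ h
        rw [abs_of_nonneg (sub_nonneg.2 h)]
        refine le_trans ?_ (le_abs_self _)
        nlinarith [mul_nonneg (sub_nonneg.2 k1) (sub_nonneg.2 b2),
          mul_nonneg (sub_nonneg.2 k2) b1]
      · obtain ⟨b1, b2⟩ := hmono _ _ h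
        rw [abs_of_nonpos (sub_nonpos.2 h)]
        refine le_trans ?_ (neg_le_abs _)
        nlinarith [mul_nonneg (sub_nonneg.2 k1) (sub_nonneg.2 b2),
          mul_nonneg (sub_nonneg.2 k2) b1]
    have hlim : Tendsto (fun s => |s - τ| * (m - c + B c + B c) / min s (1 - s)) (nhds τ)
        (nhds 0) := by
      have hca : ContinuousAt (fun s => |s - τ| * (m - c + B c + B c) / min s (1 - s)) τ := by
        refine ContinuousAt.div (by fun_prop) (by fun_prop) ?_
        exact (lt_min h0 (by linarith)).ne'
      simpa [ContinuousAt] using hca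
    have := squeeze_zero_norm' (f := fun s => μ s - c) hbd hlim
    have h3 := this.add_const c
    simpa [ContinuousAt, hcdef] using h3
  -- local inverse
  have hH : HasDerivAt (fun x => B x / (m - x + B x + B x))
      ((τ * (1 - F c) + (1 - τ) * F c) / (m - c + B c + B c)) c := by
    have hden : HasDerivAt (fun x => m - x + B x + B x) (-1 + F c + F c) c :=
      (((hasDerivAt_id c).const_sub m).add hd).add hd
    refine (hd.div hden hS.ne').congr_deriv ?_
    symm
    have hBS : B c = τ * (m - c + B c + B c) := by linarith
    rw [div_eq_div_iff hS.ne' (pow_pos hS 2).ne']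
    generalize m - c + B c + B c = S at *
    rw [hBS]; ring
  have hinv : ∀ᶠ s in nhds τ, B (μ s) / (m - μ s + B (μ s) + B (μ s)) = s := by
    have hcS : ContinuousAt (fun x => m - x + B x + B x) c := by
      have := hd.continuousAt
      fun_prop
    have hp : ∀ᶠ s in nhds τ, 0 < m - μ s + B (μ s) + B (μ s) :=
      hμc.eventually (hcS.eventually (lt_mem_nhds hS))
    filter_upwards [hev, hp] with s hs hps
    rw [div_eq_iff hps.ne']
    linarith [hμ s hs]
  have := HasDerivAt.of_local_left_inverse hμc hH (div_pos hD hS).ne' hinv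
  rwa [inv_div] at this
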